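/- arXiv:2007.14752 — 2 statements merged into one kernel-verified Lean document; each statement's English description precedes it below -/
import Mathlib

section
/- Let n | q - 1, r, δ positive integers with δ ≥ 2 and (r + δ - 1) | n, ν = n/(r+δ-1), b coprime to n, and α a primitive n-th root of unity in F_q. Fix t ∈ {0,...,n-1}, i ∈ {0,...,r-1}, and ℓ, j with either (0 ≤ ℓ ≤ ν-3 and 0 ≤ j ≤ i) or (ℓ = ν-2 and j = i). Let B = {α^0, α^b, ..., α^{(δ-2)b}} and A = {α^t, α^{t+b}, ..., α^{t+(ℓ(r+δ-1)+i)b}} ∪ {α^{t+((ℓ+1)(r+δ-1)+j)b}, α^{t+((ℓ+2)(r+δ-1)+j)b}, ..., α^{t+((ν-1)(r+δ-1)+j)b}}. Then the cyclic code C_{AB} with complete defining set AB is an optimal cyclic (r, δ)-LRC of length n over F_q with dimension (ν - ℓ)r - i and minimum distance δ + i + ℓ(r + δ - 1). -/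
noncomputable section

open Polynomial
open scoped Pointwise

/-- The cyclic code of length `n` over `K` whose complete defining set is `Z ⊆ L`,
where `L` is an extension of `K` containing the `n`-th roots of unity:
codewords are those `c` whose associated polynomial vanishes on `Z`. -/
def cyclicCodeOn (K L : Type) [Field K] [Field L] [Algebra K L]
    (n : ℕ) (Z : Set L) : Submodule K (Fin n → K) where
  carrier := {c | ∀ β ∈ Z, ∑ i : Fin n, algebraMap K L (c i) * β ^ (i : ℕ) = 0}
  add_mem' := by
    intro a b ha hb β hβ
    simp only [Pi.add_apply, map_add, add_mul, Finset.sum_add_distrib]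
    rw [ha β hβ, hb β hβ, add_zero]
  zero_mem' := by intro β hβ; simp
  smul_mem' := by
    intro r a ha β hβ
    simp only [Pi.smul_apply, smul_eq_mul, map_mul, mul_assoc, ← Finset.mul_sum]
    rw [ha β hβ, mul_zero]

/-- Cyclic code of length `n` over `F` with complete defining set `Z ⊆ F`. -/
abbrev cyclicCode (F : Type) [Field F] (n : ℕ) (Z : Set F) : Submodule F (Fin n → F) :=
  cyclicCodeOn F F n Z

/-- The dual code of a code `C ⊆ F^n` (under the standard inner product). -/
def dualSet (F : Type) [Field F] (n : ℕ) (C : Set (Fin n → F)) : Set (Fin n → F) :=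
  {v | ∀ c ∈ C, ∑ i : Fin n, v i * c i = 0}

open Classical in
/-- Hamming weight of a vector. -/
def wt {F : Type} [Zero F] {n : ℕ} (c : Fin n → F) : ℕ :=
  (Finset.univ.filter (fun i => c i ≠ 0)).card

/-- `d` is the minimum Hamming distance (= minimum nonzero weight) of the code `C`. -/
def IsMinDist {F : Type} [Zero F] {n : ℕ} (C : Set (Fin n → F)) (d : ℕ) : Prop :=
  (∃ c ∈ C, c ≠ 0 ∧ wt c = d) ∧ ∀ c ∈ C, c ≠ 0 → d ≤ wt c

open Classical in
/-- `C` has `(r, δ)`-locality: every coordinate lies in a recovery set `S` of size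
at most `r + δ - 1` such that the punctured code `C|_S` has minimum distance `≥ δ`. -/
def HasLocality {F : Type} [Zero F] {n : ℕ} (C : Set (Fin n → F)) (r δ : ℕ) : Prop :=
  ∀ i : Fin n, ∃ S : Finset (Fin n), i ∈ S ∧ S.card ≤ r + δ - 1 ∧
    ∀ c ∈ C, ∀ c' ∈ C, (∃ j ∈ S, c j ≠ c' j) →
      δ ≤ (S.filter (fun j => c j ≠ c' j)).card

/-- The polynomial `c₀ + c₁ x + ⋯ + c_{n-1} x^{n-1}` associated to a vector. -/
def vecPoly {F : Type} [Semiring F] {n : ℕ} (c : Fin n → F) : Polynomial F :=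
  ∑ i : Fin n, Polynomial.C (c i) * Polynomial.X ^ (i : ℕ)

/-- The cyclic code of length `n` generated by `g(x)` (a divisor of `x^n - 1`). -/
def codeOfGen (F : Type) [Field F] (n : ℕ) (g : Polynomial F) : Set (Fin n → F) :=
  {c | g ∣ vecPoly c}

/-- Ceiling division `⌈a / b⌉` on naturals. -/
def ceilDiv' (a b : ℕ) : ℕ := (a + b - 1) / b

/-- The code parameters meet the Singleton-like bound for `(r, δ)`-LRCs:
`d = n - k - (⌈k/r⌉ - 1)(δ - 1) + 1`. -/
def SingletonOpt (n k r δ d : ℕ) : Prop :=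
  d = n - k - (ceilDiv' k r - 1) * (δ - 1) + 1

theorem vand_aux {F : Type} [Field F] {ι : Type} [DecidableEq ι] (S : Finset ι) (f y : ι → F)
    (hy : Set.InjOn y S) (D : ℕ) (h : ∀ e < D, ∑ p ∈ S, f p * y p ^ e = 0)
    (S' : Finset ι) (hS' : S' ⊆ S) (hz : ∀ p ∈ S, p ∉ S' → f p = 0) (hc : S'.card ≤ D) :
    ∀ p ∈ S, f p = 0 := by
  intro p₀ hp₀
  by_cases hm : p₀ ∈ S'
  swap
  · exact hz p₀ hp₀ hm
  set P : Polynomial F := ∏ q ∈ S'.erase p₀, (X - C (y q)) with hP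
  have hdeg : P.natDegree < D := by
    rw [hP, Polynomial.natDegree_prod_of_monic _ _ (fun q _ => Polynomial.monic_X_sub_C _)]
    simp only [Polynomial.natDegree_X_sub_C, Finset.sum_const, smul_eq_mul, mul_one]
    have := Finset.card_erase_lt_of_mem hm
    omega
  have h1 : ∑ p ∈ S, f p * P.eval (y p) = 0 := by
    simp only [Polynomial.eval_eq_sum_range, Finset.mul_sum]
    rw [Finset.sum_comm]
    apply Finset.sum_eq_zero
    intro e he
    have := h e (by rw [Finset.mem_range] at he; omega)
    calc _ = P.coeff e * ∑ p ∈ S, f p * y p ^ e := by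
            rw [Finset.mul_sum]; apply Finset.sum_congr rfl; intros; ring
      _ = 0 := by rw [this, mul_zero]
  rw [Finset.sum_eq_single p₀] at h1
  · rcases mul_eq_zero.1 h1 with h2 | h2
    · exact h2
    · exfalso
      rw [hP, Polynomial.eval_prod, Finset.prod_eq_zero_iff] at h2
      obtain ⟨q, hq, hq0⟩ := h2
      simp only [Polynomial.eval_sub, Polynomial.eval_X, Polynomial.eval_C, sub_eq_zero] at hq0
      rw [Finset.mem_erase] at hq
      exact hq.1 (hy (hS' hq.2) hp₀ hq0.symm)
  · intro p hp hne
    by_cases hpS : p ∈ S'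
    · have : P.eval (y p) = 0 := by
        rw [hP, Polynomial.eval_prod]
        apply Finset.prod_eq_zero (Finset.mem_erase.2 ⟨hne, hpS⟩)
        simp
      rw [this, mul_zero]
    · rw [hz p hp hpS, zero_mul]
  · intro h; exact absurd hp₀ h

theorem card_grid (n ν m : ℕ) (hn : n = ν * m) (T : Finset (ℕ × ℕ))
    (hT : ∀ x ∈ T, x.1 < ν ∧ x.2 < m) :
    (Finset.univ.filter (fun p : Fin n => ((p : ℕ) % ν, (p : ℕ) / ν) ∈ T)).card = T.card := by
  apply Finset.card_bij (fun (p : Fin n) _ => ((p : ℕ) % ν, (p : ℕ) / ν))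
  · intro p hp
    exact (Finset.mem_filter.1 hp).2
  · intro p _ q _ h
    simp only [Prod.mk.injEq] at h
    apply Fin.ext
    rw [← Nat.mod_add_div p ν, ← Nat.mod_add_div q ν, h.1, h.2]
  · rintro ⟨s, x⟩ h
    obtain ⟨h1, h2⟩ := hT _ h
    simp only at h1 h2
    have hlt : s + ν * x < n := by
      rw [hn]; nlinarith
    have e1 : (s + ν * x) % ν = s := by
      rw [Nat.add_mul_mod_self_left, Nat.mod_eq_of_lt h1]
    have e2 : (s + ν * x) / ν = x := by
      rw [Nat.add_mul_div_left _ _ (by omega), Nat.div_eq_of_lt h1, zero_add]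
    refine ⟨⟨s + ν * x, hlt⟩, ?_, ?_⟩
    · simp only [Finset.mem_filter, Finset.mem_univ, true_and, e1, e2]; exact h
    · simp only [e1, e2]

theorem singleton_aux (n r D i ℓ W : ℕ) (hi : i < r)
    (hnm : n = (ℓ + W + 1) * (r + D)) :
    SingletonOpt n ((W + 1) * r - i) r (D + 1) (D + 1 + i + ℓ * (r + D)) := by
  unfold SingletonOpt ceilDiv'
  have h0 : (W + 1) * r - i = W * r + (r - i) := by
    rw [Nat.add_mul, one_mul]; omega
  have h1 : ((W + 1) * r - i + r - 1) / r = W + 1 := by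
    rw [h0]
    apply Nat.div_eq_of_lt_le
    · rw [Nat.add_mul, one_mul]; omega
    · rw [Nat.add_mul, Nat.add_mul, one_mul]; omega
  rw [h1, h0]
  have h2 : n = ℓ * (r + D) + W * r + W * D + r + D := by rw [hnm]; ring
  simp only [Nat.add_sub_cancel]
  omega

theorem finrank_aux (F : Type) [Field F] (n b t : ℕ) (hb : Nat.Coprime b n) (α : F)
    (hα : IsPrimitiveRoot α n) (hn : 0 < n)
    (hinj : ∀ p < n, ∀ q < n, α ^ (b * p) = α ^ (b * q) → p = q)
    (E : Finset ℕ) (hE : ∀ e ∈ E, e < n) (Z : Set F)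
    (hZ : ∀ x, x ∈ Z ↔ ∃ e ∈ E, x = α ^ (t + e * b)) :
    Module.finrank F (cyclicCode F n Z) = n - E.card := by
  let Φ : (Fin n → F) →ₗ[F] (Fin n → F) :=
    { toFun := fun c e => ∑ p : Fin n, c p * (α ^ (t + (e : ℕ) * b)) ^ (p : ℕ)
      map_add' := by
        intro x y; ext e
        simp only [Pi.add_apply, add_mul, Finset.sum_add_distrib]
      map_smul' := by
        intro a x; ext e
        simp only [Pi.smul_apply, smul_eq_mul, mul_assoc, Finset.mul_sum, RingHom.id_apply] }
  have hΦ : Function.Injective Φ := by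
    rw [← LinearMap.ker_eq_bot, LinearMap.ker_eq_bot']
    intro c hc
    have := vand_aux Finset.univ (fun p : Fin n => c p * α ^ (t * (p : ℕ)))
      (fun p => α ^ (b * (p : ℕ)))
      (by intro p _ q _ h; exact Fin.ext (hinj _ p.2 _ q.2 h)) n
      (by
        intro e he
        have := congrFun hc ⟨e, he⟩
        simp only [Φ, LinearMap.coe_mk, AddHom.coe_mk, Pi.zero_apply] at this
        rw [← this]
        apply Finset.sum_congr rfl
        intro p _
        ring)
      Finset.univ (Finset.Subset.refl _) (by simp) (by simp)
    ext p
    have h := this p (Finset.mem_univ _)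
    exact (mul_eq_zero.1 h).resolve_right (pow_ne_zero _ (hα.ne_zero hn.ne'))
  have hΦs : Function.Surjective Φ := LinearMap.injective_iff_surjective.1 hΦ
  let g : E → Fin n := fun e => ⟨e, hE e e.2⟩
  have hg : Function.Injective g := by
    intro x y h
    apply Subtype.ext
    exact congrArg Fin.val h
  let Ψ := (LinearMap.funLeft F F g).comp Φ
  have hΨ : Function.Surjective Ψ :=
    (LinearMap.funLeft_surjective_of_injective F F g hg).comp hΦs
  have hker : cyclicCode F n Z = LinearMap.ker Ψ := by
    ext c
    rw [LinearMap.mem_ker]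
    constructor
    · intro h
      ext e
      exact h _ ((hZ _).2 ⟨e, e.2, rfl⟩)
    · intro h β hβ
      obtain ⟨e, he, rfl⟩ := (hZ _).1 hβ
      exact congrFun h ⟨e, he⟩
  have h1 := LinearMap.finrank_range_add_finrank_ker Ψ
  rw [LinearMap.range_eq_top.2 hΨ, finrank_top] at h1
  simp only [Module.finrank_fintype_fun_eq_card, Fintype.card_fin, Fintype.card_coe] at h1
  rw [hker]
  omega

theorem local_aux (F : Type) [Field F] (n ν m D b t j : ℕ) (hnm : n = ν * m) (hν : 0 < ν)
    (hm : 0 < m) (α : F) (h0 : α ≠ 0) (h1n : α ^ n = 1)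
    (hinj : ∀ p < n, ∀ q < n, α ^ (b * p) = α ^ (b * q) → p = q)
    (c : Fin n → F)
    (hc : ∀ u < ν, ∀ e < D, ∑ p : Fin n, c p * (α ^ (t + (u * m + j + e) * b)) ^ (p : ℕ) = 0)
    (s : ℕ) (S' : Finset (Fin n)) (hS' : ∀ p ∈ S', (p : ℕ) % ν = s)
    (hz : ∀ p : Fin n, (p : ℕ) % ν = s → p ∉ S' → c p = 0) (hcard : S'.card ≤ D) :
    ∀ p : Fin n, (p : ℕ) % ν = s → c p = 0 := by
  classical
  have key : ∀ e < D, ∀ s' < ν, ∑ p ∈ Finset.univ.filter (fun p : Fin n => (p : ℕ) % ν = s'),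
      c p * (α ^ (t + (j + e) * b)) ^ (p : ℕ) = 0 := by
    intro e he
    have := vand_aux (Finset.range ν) (fun s' => ∑ p ∈ Finset.univ.filter (fun p : Fin n => (p : ℕ) % ν = s'),
      c p * (α ^ (t + (j + e) * b)) ^ (p : ℕ)) (fun s' => α ^ (b * (m * s')))
      (by
        intro x hx y hy h
        simp only [Finset.coe_range, Set.mem_Iio] at hx hy
        have := hinj (m * x) (by rw [hnm]; nlinarith) (m * y) (by rw [hnm]; nlinarith) h
        exact Nat.eq_of_mul_eq_mul_left hm this) ν
      (by
        intro u hu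
        rw [← hc u hu e he]
        rw [← Finset.sum_fiberwise_of_maps_to (s := Finset.univ) (t := Finset.range ν)
          (g := fun p : Fin n => (p : ℕ) % ν)
          (fun p _ => Finset.mem_range.2 (Nat.mod_lt _ hν))]
        apply Finset.sum_congr rfl
        intro s' _
        rw [Finset.sum_mul]
        apply Finset.sum_congr rfl
        intro p hp
        have hp' : (p : ℕ) % ν = s' := (Finset.mem_filter.1 hp).2
        have : (α ^ (b * (m * s'))) ^ u = α ^ (u * m * b * p) := by
          conv_rhs => rw [← Nat.mod_add_div p ν, hp']
          have e1 : u * m * b * (s' + ν * (p / ν)) = b * (m * s') * u + n * (u * b * (p / ν)) := by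
            generalize (p : ℕ) / ν = z
            calc _ = b * (m * s') * u + (ν * m) * (u * b * z) := by ring
              _ = _ := by rw [← hnm]
          rw [e1, pow_add, pow_mul α n, h1n, one_pow, mul_one, ← pow_mul]
        rw [this]
        ring)
      (Finset.range ν) (Finset.Subset.refl _) (fun p hp h => absurd hp h) (by simp)
    intro s' hs'
    exact this s' (Finset.mem_range.2 hs')
  intro p hp
  have hs : s < ν := hp ▸ Nat.mod_lt _ hν
  have := vand_aux (Finset.univ.filter (fun p : Fin n => (p : ℕ) % ν = s))
    (fun p => c p * α ^ ((t + j * b) * (p : ℕ))) (fun p => α ^ (b * (p : ℕ)))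
    (by intro p _ q _ h; exact Fin.ext (hinj _ p.2 _ q.2 h)) D
    (by
      intro e he
      rw [← key e he s hs]
      apply Finset.sum_congr rfl
      intro p _
      ring)
    S' (fun p hp => Finset.mem_filter.2 ⟨Finset.mem_univ _, hS' p hp⟩)
    (fun p hp hpS => by rw [hz p (Finset.mem_filter.1 hp).2 hpS, zero_mul]) hcard
    p (Finset.mem_filter.2 ⟨Finset.mem_univ _, hp⟩)
  exact (mul_eq_zero.1 this).resolve_right (pow_ne_zero _ h0)

theorem core_aux (F : Type) [Field F] (n r D b t i ℓ j W : ℕ)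
    (hn : 0 < n) (hD : 1 ≤ D) (hb : Nat.Coprime b n)
    (hnm : n = (ℓ + W + 1) * (r + D))
    (α : F) (hα : IsPrimitiveRoot α n) (hi : i < r) (hj : j ≤ i) (Z : Set F)
    (hZ : ∀ x, x ∈ Z ↔ ∃ e, (e < ℓ * (r + D) + i + D ∨
      ∃ u, ℓ + 1 ≤ u ∧ u < ℓ + W + 1 ∧ ∃ e' < D, e = u * (r + D) + j + e') ∧
        x = α ^ (t + e * b)) :
    HasLocality (cyclicCode F n Z : Set (Fin n → F)) r (D + 1) ∧
    Module.finrank F (cyclicCode F n Z) = (W + 1) * r - i ∧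
    IsMinDist (cyclicCode F n Z : Set (Fin n → F)) (D + 1 + i + ℓ * (r + D)) := by
  classical
  have h0 : α ≠ 0 := hα.ne_zero hn.ne'
  have hinj : ∀ p < n, ∀ q < n, α ^ (b * p) = α ^ (b * q) → p = q := by
    intro p hp q hq h
    have h2 := hα.pow_of_coprime b hb
    rw [pow_mul, pow_mul] at h
    exact h2.pow_inj hp hq h
  set ν := ℓ + W + 1 with hν
  set m := r + D with hm
  -- local vanishing
  have hloc : ∀ c ∈ cyclicCode F n Z, ∀ (s : ℕ) (S' : Finset (Fin n)),
      (∀ p ∈ S', (p : ℕ) % ν = s) →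
      (∀ p : Fin n, (p : ℕ) % ν = s → p ∉ S' → c p = 0) → S'.card ≤ D →
      ∀ p : Fin n, (p : ℕ) % ν = s → c p = 0 := by
    intro c hc s S' h1 h2 h3
    refine local_aux F n ν m D b t j hnm (by omega) (by omega) α h0 hα.pow_eq_one hinj c ?_
      s S' h1 h2 h3
    intro u hu e he
    refine hc _ ((hZ _).2 ⟨_, ?_, rfl⟩)
    by_cases hul : u ≤ ℓ
    · left
      have : u * m ≤ ℓ * m := Nat.mul_le_mul_right _ hul
      omega
    · right
      exact ⟨u, by omega, hu, e, he, rfl⟩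
  have hdim : Module.finrank F (cyclicCode F n Z) = (W + 1) * r - i := by
    let E1 : Finset ℕ := Finset.range (ℓ * m + i + D)
    let G : ℕ × ℕ → ℕ := fun x => x.1 * m + j + x.2
    let T := Finset.Ico (ℓ + 1) ν ×ˢ Finset.range D
    let E2 : Finset ℕ := T.image G
    have hc2 : E2.card = W * D := by
      rw [Finset.card_image_of_injOn]
      · simp only [T, Finset.card_product, Nat.card_Ico, Finset.card_range]
        congr 1
        omega
      · rintro ⟨u, x⟩ hx ⟨v, y⟩ hy h
        simp only [T, Finset.coe_product, Set.mem_prod, Finset.coe_Ico, Set.mem_Ico,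
          Finset.coe_range, Set.mem_Iio] at hx hy
        simp only [G] at h
        have huv : u = v := by
          rcases lt_trichotomy u v with h' | h' | h'
          · have := Nat.mul_le_mul_right m h'
            rw [Nat.succ_mul] at this
            omega
          · exact h'
          · have := Nat.mul_le_mul_right m h'
            rw [Nat.succ_mul] at this
            omega
        subst huv
        simp only [Prod.mk.injEq, true_and]
        omega
    have hmem2 : ∀ e, e ∈ E2 ↔ ∃ u, ℓ + 1 ≤ u ∧ u < ν ∧ ∃ e' < D, e = u * m + j + e' := by
      intro e
      simp only [E2, T, G, Finset.mem_image, Finset.mem_product, Finset.mem_Ico,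
        Finset.mem_range, Prod.exists]
      constructor
      · rintro ⟨u, x, ⟨⟨h1, h2⟩, h3⟩, h4⟩
        exact ⟨u, h1, h2, x, h3, h4.symm⟩
      · rintro ⟨u, h1, h2, x, h3, h4⟩
        exact ⟨u, x, ⟨⟨h1, h2⟩, h3⟩, h4.symm⟩
    have hdisj : Disjoint E1 E2 := by
      rw [Finset.disjoint_left]
      intro e h1 h2
      obtain ⟨u, hu, _, x, _, rfl⟩ := (hmem2 e).1 h2
      simp only [E1, Finset.mem_range] at h1
      have := Nat.mul_le_mul_right m hu
      rw [Nat.succ_mul] at this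
      omega
    rw [finrank_aux F n b t hb α hα hn hinj (E1 ∪ E2) ?_ Z ?_]
    · rw [Finset.card_union_of_disjoint hdisj, hc2]
      simp only [E1, Finset.card_range]
      have h2 : n = ℓ * m + W * r + W * D + r + D := by rw [hnm, hm]; ring
      rw [Nat.add_mul, one_mul]
      omega
    · intro e he
      have h2 : n = ℓ * m + W * m + m := by rw [hnm]; ring
      rcases Finset.mem_union.1 he with h | h
      · simp only [E1, Finset.mem_range] at h
        omega
      · obtain ⟨u, _, hu, x, _, rfl⟩ := (hmem2 e).1 h
        have := Nat.mul_le_mul_right m hu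
        rw [Nat.succ_mul, ← hnm] at this
        omega
    · intro x
      rw [hZ]
      simp only [Finset.mem_union, hmem2]
      simp only [E1, Finset.mem_range]
  refine ⟨?_, hdim, ?_, ?_⟩
  · intro p₀
    refine ⟨Finset.univ.filter (fun p : Fin n => (p : ℕ) % ν = (p₀ : ℕ) % ν), by simp, ?_, ?_⟩
    · have := card_grid n ν m hnm ({(p₀ : ℕ) % ν} ×ˢ Finset.range m) (by
        rintro ⟨s, x⟩ h
        simp only [Finset.mem_product, Finset.mem_singleton, Finset.mem_range] at h
        exact ⟨h.1 ▸ Nat.mod_lt _ (by omega), h.2⟩)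
      rw [Finset.card_product, Finset.card_singleton, Finset.card_range, one_mul] at this
      have e : r + (D + 1) - 1 = m := by omega
      rw [e, ← this]
      apply Finset.card_le_card
      intro p hp
      have hp := (Finset.mem_filter.1 hp).2
      simp only [Finset.mem_filter, Finset.mem_univ, true_and, Finset.mem_product,
        Finset.mem_singleton, Finset.mem_range]
      exact ⟨hp, Nat.div_lt_of_lt_mul (hnm ▸ p.2)⟩
    · rintro c hc c' hc' ⟨q, hq, hne⟩
      by_contra hlt
      apply hne
      rw [← sub_eq_zero]
      refine hloc (c - c') (Submodule.sub_mem _ hc hc') ((p₀ : ℕ) % ν) _ ?_ ?_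
        (Nat.le_of_lt_succ (not_le.1 hlt)) q (Finset.mem_filter.1 hq).2
      · intro p hp
        exact (Finset.mem_filter.1 (Finset.mem_filter.1 hp).1).2
      · intro p hp hpn
        by_contra h
        apply hpn
        simp only [Finset.mem_filter, Finset.mem_univ, true_and]
        exact ⟨hp, fun h' => h (by simp [h'])⟩
  rotate_left
  · intro c hc hc0
    by_contra hlt
    apply hc0
    have := vand_aux Finset.univ (fun p : Fin n => c p * α ^ (t * (p : ℕ)))
      (fun p => α ^ (b * (p : ℕ)))
      (by intro p _ q _ h; exact Fin.ext (hinj _ p.2 _ q.2 h)) (ℓ * m + i + D)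
      (by
        intro e he
        have := hc _ ((hZ _).2 ⟨e, Or.inl he, rfl⟩)
        rw [← this]
        apply Finset.sum_congr rfl
        intro p _
        simp only [Algebra.algebraMap_self, RingHom.id_apply]
        ring)
      (Finset.univ.filter (fun i => c i ≠ 0)) (Finset.subset_univ _)
      (by
        intro p _ hp
        simp only [Finset.mem_filter, Finset.mem_univ, true_and, not_not] at hp
        simp [hp]) (by
        have : wt c = (Finset.univ.filter (fun i => c i ≠ 0)).card := by
          unfold wt; congr
        omega)
    ext p
    exact (mul_eq_zero.1 (this p (Finset.mem_univ _))).resolve_right (pow_ne_zero _ h0)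
  · -- existence
    have hlow : ∀ c ∈ cyclicCode F n Z, c ≠ 0 → D + 1 + i + ℓ * m ≤ wt c := by
      intro c hc hc0
      by_contra hlt
      apply hc0
      have := vand_aux Finset.univ (fun p : Fin n => c p * α ^ (t * (p : ℕ)))
        (fun p => α ^ (b * (p : ℕ)))
        (by intro p _ q _ h; exact Fin.ext (hinj _ p.2 _ q.2 h)) (ℓ * m + i + D)
        (by
          intro e he
          have := hc _ ((hZ _).2 ⟨e, Or.inl he, rfl⟩)
          rw [← this]
          apply Finset.sum_congr rfl
          intro p _
          simp only [Algebra.algebraMap_self, RingHom.id_apply]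
          ring)
        (Finset.univ.filter (fun i => c i ≠ 0)) (Finset.subset_univ _)
        (by
          intro p _ hp
          simp only [Finset.mem_filter, Finset.mem_univ, true_and, not_not] at hp
          simp [hp]) (by
          have : wt c = (Finset.univ.filter (fun i => c i ≠ 0)).card := by
            unfold wt; congr
          omega)
      ext p
      exact (mul_eq_zero.1 (this p (Finset.mem_univ _))).resolve_right (pow_ne_zero _ h0)
    let T : ℕ → Finset (ℕ × ℕ) := fun a =>
      (Finset.range W ×ˢ Finset.range a) ∪ ({W} ×ˢ Finset.range (r - i - 1))
    have hTmem : ∀ a s x, (s, x) ∈ T a ↔ (s < W ∧ x < a) ∨ (s = W ∧ x < r - i - 1) := by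
      intro a s x
      simp only [T, Finset.mem_union, Finset.mem_product, Finset.mem_singleton, Finset.mem_range]
    have hTcard : ∀ a, (T a).card = W * a + (r - i - 1) := by
      intro a
      rw [Finset.card_union_of_disjoint]
      · simp
      · rw [Finset.disjoint_left]
        rintro ⟨s, x⟩ h1 h2
        simp only [Finset.mem_product, Finset.mem_singleton, Finset.mem_range] at h1 h2
        omega
    have hTg : ∀ a ≤ m, (Finset.univ.filter
        (fun p : Fin n => ((p : ℕ) % ν, (p : ℕ) / ν) ∈ T a)).card = W * a + (r - i - 1) := by
      intro a ha
      rw [card_grid n ν m hnm (T a), hTcard]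
      rintro ⟨s, x⟩ h
      rw [hTmem] at h
      constructor <;> simp only <;> omega
    set P := Finset.univ.filter (fun p : Fin n => ((p : ℕ) % ν, (p : ℕ) / ν) ∈ T r) with hP
    let Θ : cyclicCode F n Z →ₗ[F] (P → F) :=
      (LinearMap.funLeft F F (fun p : P => (p : Fin n))).comp (cyclicCode F n Z).subtype
    have hΘ : LinearMap.ker Θ ≠ ⊥ := by
      apply LinearMap.ker_ne_bot_of_finrank_lt
      rw [hdim, Module.finrank_fintype_fun_eq_card, Fintype.card_coe, hTg r (by omega),
        Nat.add_mul, one_mul]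
      omega
    obtain ⟨⟨c, hc⟩, hcK, hc0⟩ := (Submodule.ne_bot_iff _).1 hΘ
    have hcne : c ≠ 0 := by
      intro h; apply hc0; exact Subtype.ext h
    have hcz : ∀ p : Fin n, ((p : ℕ) % ν, (p : ℕ) / ν) ∈ T r → c p = 0 := by
      intro p hp
      exact congrFun (LinearMap.mem_ker.1 hcK) ⟨p, Finset.mem_filter.2 ⟨Finset.mem_univ _, hp⟩⟩
    have hcz2 : ∀ p : Fin n, (p : ℕ) % ν < W → c p = 0 := by
      intro p hp
      have hg := card_grid n ν m hnm ({(p : ℕ) % ν} ×ˢ Finset.Ico r m) (by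
        rintro ⟨s, x⟩ h
        simp only [Finset.mem_product, Finset.mem_singleton, Finset.mem_Ico] at h
        exact ⟨h.1 ▸ Nat.mod_lt _ (by omega), h.2.2⟩)
      rw [Finset.card_product, Finset.card_singleton, Nat.card_Ico, one_mul] at hg
      refine hloc c hc ((p : ℕ) % ν) _ ?_ ?_ (le_of_eq (hg.trans (by omega))) p rfl
      · intro q hq
        simp only [Finset.mem_filter, Finset.mem_univ, true_and, Finset.mem_product,
          Finset.mem_singleton] at hq
        exact hq.1
      · intro q hq hqn
        apply hcz
        rw [hTmem]
        left
        refine ⟨hq ▸ hp, ?_⟩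
        by_contra h
        apply hqn
        simp only [Finset.mem_filter, Finset.mem_univ, true_and, Finset.mem_product,
          Finset.mem_singleton, Finset.mem_Ico]
        exact ⟨hq, not_lt.1 h, Nat.div_lt_of_lt_mul (hnm ▸ q.2)⟩
    refine ⟨c, hc, hcne, le_antisymm ?_ (hlow c hc hcne)⟩
    have hw : wt c = (Finset.univ.filter (fun i => c i ≠ 0)).card := by
      unfold wt; congr
    have hg := hTg m le_rfl
    have hd : Disjoint (Finset.univ.filter (fun i => c i ≠ 0)) (Finset.univ.filter
        (fun p : Fin n => ((p : ℕ) % ν, (p : ℕ) / ν) ∈ T m)) := by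
      rw [Finset.disjoint_left]
      intro p h1 h2
      have h1 := (Finset.mem_filter.1 h1).2
      have h2 := (Finset.mem_filter.1 h2).2
      rw [hTmem] at h2
      rcases h2 with h2 | h2
      · exact h1 (hcz2 p h2.1)
      · exact h1 (hcz p ((hTmem _ _ _).2 (Or.inr h2)))
    have hu := Finset.card_le_univ (Finset.univ.filter (fun i => c i ≠ 0) ∪ Finset.univ.filter
        (fun p : Fin n => ((p : ℕ) % ν, (p : ℕ) / ν) ∈ T m))
    rw [Finset.card_union_of_disjoint hd, hg, ← hw, Fintype.card_fin] at hu
    have h2 : n = ℓ * m + W * m + m := by rw [hnm]; ring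
    omega

/-- explicit construction (Corollary 4.2 of the paper) of optimal cyclic
`(r,δ)`-LRCs of length `n ∣ q - 1` with `(r+δ-1) ∣ n`. -/
theorem stmt8 (F : Type) [Field F] [Fintype F] (n r δ b t i ℓ j : ℕ)
    (hn : 0 < n) (hr : 0 < r) (hδ : 2 ≤ δ)
    (hdvd : n ∣ Fintype.card F - 1) (hb : Nat.Coprime b n)
    (hrdn : (r + δ - 1) ∣ n)
    (α : F) (hα : IsPrimitiveRoot α n)
    (ht : t ≤ n - 1) (hi : i ≤ r - 1)
    (hcase : (ℓ ≤ n / (r + δ - 1) - 3 ∧ j ≤ i) ∨ (ℓ = n / (r + δ - 1) - 2 ∧ j = i))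
    (A B : Set F)
    (hAdef : A = {x : F | ∃ e ≤ ℓ * (r + δ - 1) + i, x = α ^ (t + e * b)} ∪
      {x : F | ∃ u, ℓ + 1 ≤ u ∧ u ≤ n / (r + δ - 1) - 1 ∧
        x = α ^ (t + (u * (r + δ - 1) + j) * b)})
    (hBdef : B = {x : F | ∃ e ≤ δ - 2, x = α ^ (e * b)}) :
    HasLocality (cyclicCode F n (A * B) : Set (Fin n → F)) r δ ∧
    Module.finrank F (cyclicCode F n (A * B)) = (n / (r + δ - 1) - ℓ) * r - i ∧
    IsMinDist (cyclicCode F n (A * B) : Set (Fin n → F))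
      (δ + i + ℓ * (r + δ - 1)) ∧
    SingletonOpt n ((n / (r + δ - 1) - ℓ) * r - i) r δ (δ + i + ℓ * (r + δ - 1)) := by
  obtain ⟨D, rfl⟩ : ∃ D, δ = D + 1 := ⟨δ - 1, by omega⟩
  have hm : r + (D + 1) - 1 = r + D := by omega
  rw [hm] at hrdn hcase hAdef ⊢
  obtain ⟨ν, hν⟩ := hrdn
  have hdiv : n / (r + D) = ν := by
    rw [hν]; exact Nat.mul_div_cancel_left _ (by omega)
  rw [hdiv] at hcase hAdef ⊢
  have hνpos : 0 < ν := by
    rcases Nat.eq_zero_or_pos ν with h | h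
    · rw [h, mul_zero] at hν; omega
    · exact h
  have hji : j ≤ i := by omega
  obtain ⟨W, rfl⟩ : ∃ W, ν = ℓ + W + 1 := ⟨ν - ℓ - 1, by omega⟩
  have hW : ℓ + W + 1 - ℓ = W + 1 := by omega
  rw [hW]
  have hnm : n = (ℓ + W + 1) * (r + D) := by rw [hν]; ring
  have hZ : ∀ x, x ∈ A * B ↔ ∃ e, (e < ℓ * (r + D) + i + D ∨
      ∃ u, ℓ + 1 ≤ u ∧ u < ℓ + W + 1 ∧ ∃ e' < D, e = u * (r + D) + j + e') ∧
        x = α ^ (t + e * b) := by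
    intro x
    rw [Set.mem_mul, hAdef, hBdef]
    constructor
    · rintro ⟨y, hy, z, ⟨e', he', rfl⟩, rfl⟩
      rcases hy with ⟨e, he, rfl⟩ | ⟨u, h1, h2, rfl⟩
      · exact ⟨e + e', Or.inl (by omega), by ring⟩
      · exact ⟨_, Or.inr ⟨u, h1, by omega, e', by omega, rfl⟩, by ring⟩
    · rintro ⟨e, he | ⟨u, h1, h2, e', he', rfl⟩, rfl⟩
      · refine ⟨_, Or.inl ⟨min e (ℓ * (r + D) + i), min_le_right _ _, rfl⟩, _,
          ⟨e - min e (ℓ * (r + D) + i), by omega, rfl⟩, ?_⟩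
        rw [← pow_add, add_assoc, ← Nat.add_mul]
        congr 3
        omega
      · exact ⟨_, Or.inr ⟨u, h1, by omega, rfl⟩, _, ⟨e', by omega, rfl⟩, by ring⟩
  obtain ⟨h1, h2, h3⟩ := core_aux F n r D b t i ℓ j W hn (by omega) hb hnm α hα (by omega) hji
    (A * B) hZ
  exact ⟨h1, h2, h3, singleton_aux n r D i ℓ W (by omega) hnm⟩
end
end

section
/- Let n | q + 1, r and δ positive integers with δ even, (r + δ - 1) | n, ν = n/(r+δ-1), and α a primitive n-th root of unity in F_{q^2}. For i ∈ {0,...,⌊(r-1)/2⌋} and ℓ ∈ {0,...,⌊(ν-2)/2⌋}, let B = {α^0, α^{±1}, ..., α^{±(δ-2)/2}} and A = {α^0, α^{±1}, ..., α^{±(ℓ(r+δ-1)+i)}} ∪ {α^{(ℓ+1)(r+δ-1)}, α^{(ℓ+2)(r+δ-1)}, ..., α^{(ν-ℓ-1)(r+δ-1)}}. Then the cyclic code C_{AB} of length n over F_q with complete defining set AB is an optimal cyclic (r, δ)-LRC with dimension (ν - 2ℓ)r - 2i and minimum distance δ + 2i + 2ℓ(r + δ - 1). -/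
noncomputable section

open Polynomial
open scoped Pointwise

lemma vand_zero {ι L : Type} [Field L] (S : Finset ι) (x a : ι → L)
    (hx : Set.InjOn x S) (N : ℕ) (hc : S.card ≤ N)
    (h : ∀ t < N, ∑ j ∈ S, a j * x j ^ t = 0) : ∀ j ∈ S, a j = 0 := by
  classical
  intro j hj
  have key : ∀ p : Polynomial L, p.natDegree < N → ∑ k ∈ S, a k * p.eval (x k) = 0 := by
    intro p hp
    simp_rw [Polynomial.eval_eq_sum_range' hp, Finset.mul_sum]
    rw [Finset.sum_comm]
    apply Finset.sum_eq_zero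
    intro t ht
    have := h t (Finset.mem_range.1 ht)
    calc ∑ k ∈ S, a k * (p.coeff t * x k ^ t) = p.coeff t * ∑ k ∈ S, a k * x k ^ t := by
          rw [Finset.mul_sum]; exact Finset.sum_congr rfl fun k _ => by ring
      _ = 0 := by rw [this, mul_zero]
  have h1 := key (∏ k ∈ S.erase j, (X - C (x k))) (by
    rw [Polynomial.natDegree_prod_of_monic _ _ (fun k _ => monic_X_sub_C _)]
    simp only [natDegree_X_sub_C, Finset.sum_const, smul_eq_mul, mul_one]
    have := Finset.card_erase_lt_of_mem hj
    omega)
  rw [Finset.sum_eq_single j] at h1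
  · rcases mul_eq_zero.1 h1 with h2 | h2
    · exact h2
    · exfalso
      rw [Polynomial.eval_prod, Finset.prod_eq_zero_iff] at h2
      obtain ⟨k, hk, hk2⟩ := h2
      simp only [eval_sub, eval_X, eval_C, sub_eq_zero] at hk2
      exact (Finset.mem_erase.1 hk).1 (hx (Finset.mem_of_mem_erase hk) hj hk2.symm)
  · intro k hk hkj
    rw [Polynomial.eval_prod, Finset.prod_eq_zero (Finset.mem_erase.2 ⟨hkj, hk⟩) (by simp), mul_zero]
  · intro h3; exact absurd hj h3

lemma fixed_mem_range (K L : Type) [Field K] [Fintype K] [Field L] [Algebra K L] (x : L)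
    (hx : x ^ Fintype.card K = x) : x ∈ Set.range (algebraMap K L) := by
  classical
  set q := Fintype.card K with hq
  have hq1 : 1 < q := Fintype.one_lt_card
  have hne : (X ^ q - X : L[X]) ≠ 0 := FiniteField.X_pow_card_sub_X_ne_zero L hq1
  have hsub : Finset.univ.image (algebraMap K L) ⊆ (X ^ q - X : L[X]).roots.toFinset := by
    intro y hy
    obtain ⟨k, -, rfl⟩ := Finset.mem_image.1 hy
    rw [Multiset.mem_toFinset, mem_roots hne]
    simp [← map_pow, hq, FiniteField.pow_card]
  have hcard : (X ^ q - X : L[X]).roots.toFinset.card ≤ (Finset.univ.image (algebraMap K L)).card := by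
    rw [Finset.card_image_of_injective _ (algebraMap K L).injective, Finset.card_univ]
    calc _ ≤ Multiset.card (X ^ q - X : L[X]).roots := Multiset.toFinset_card_le _
      _ ≤ (X ^ q - X : L[X]).natDegree := card_roots' _
      _ = _ := FiniteField.X_pow_card_sub_X_natDegree_eq L hq1
  have heq := Finset.eq_of_subset_of_card_le hsub hcard
  have hx2 : x ∈ (X ^ q - X : L[X]).roots.toFinset := by
    rw [Multiset.mem_toFinset, mem_roots hne]
    simp [hx]
  rw [← heq] at hx2
  obtain ⟨k, -, hk⟩ := Finset.mem_image.1 hx2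
  exact ⟨k, hk⟩

lemma finrank_code (K L : Type) [Field K] [Fintype K] [Field L] [Algebra K L] (n : ℕ)
    (Z : Finset L) (hZ : ∀ z ∈ Z, z ^ Fintype.card K ∈ Z) (hn : Z.card ≤ n) :
    Module.finrank K (cyclicCodeOn K L n (Z : Set L)) = n - Z.card := by
  classical
  set g : L[X] := ∏ z ∈ Z, (X - C z) with hg
  have hmon : g.Monic := monic_prod_of_monic _ _ fun z _ => monic_X_sub_C z
  have hdeg : g.natDegree = Z.card := by
    rw [hg, Polynomial.natDegree_prod_of_monic _ _ (fun k _ => monic_X_sub_C _)]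
    simp
  have hfr : g.map (FiniteField.frobeniusAlgHom K L : L →+* L) = g := by
    rw [hg, Polynomial.map_prod]
    simp only [Polynomial.map_sub, Polynomial.map_X, Polynomial.map_C]
    have hinj : Set.InjOn (fun z : L => z ^ Fintype.card K) Z :=
      fun a _ b _ hab => (FiniteField.frobeniusAlgHom K L : L →+* L).injective hab
    have himg : Z.image (fun z : L => z ^ Fintype.card K) = Z := by
      apply Finset.eq_of_subset_of_card_le
      · intro y hy
        obtain ⟨z, hz, rfl⟩ := Finset.mem_image.1 hy
        exact hZ z hz
      · rw [Finset.card_image_of_injOn hinj]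
    conv_rhs => rw [← himg]
    rw [Finset.prod_image hinj]
    rfl
  have hlift : g ∈ lifts (algebraMap K L) := by
    rw [lifts_iff_coeff_lifts]
    intro t
    apply fixed_mem_range
    have := congrArg (fun p => p.coeff t) hfr
    simpa using this
  obtain ⟨g0, hg0⟩ := (mem_lifts _).1 hlift
  have hmon0 : g0.Monic := by
    rw [← hg0] at hmon
    exact Polynomial.monic_of_injective (algebraMap K L).injective hmon
  have hdeg0 : g0.natDegree = Z.card := by
    rw [← hdeg, ← hg0, Polynomial.natDegree_map]
  let φ : degreeLT K (n - Z.card) →ₗ[K] (Fin n → K) :=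
    { toFun := fun p j => (g0 * (p : K[X])).coeff j
      map_add' := by intro p p'; ext j; simp [mul_add]
      map_smul' := by intro p p'; ext j; simp }
  have hbound : ∀ p : degreeLT K (n - Z.card), (g0 * (p : K[X])).degree < n := by
    intro p
    have hp := mem_degreeLT.1 p.2
    by_cases h0 : (p : K[X]) = 0
    · rw [h0, mul_zero, degree_zero]; exact WithBot.bot_lt_coe n
    · rw [← natDegree_lt_iff_degree_lt h0] at hp
      rw [← natDegree_lt_iff_degree_lt (mul_ne_zero hmon0.ne_zero h0),
        natDegree_mul hmon0.ne_zero h0, hdeg0]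
      omega
  have hφ : Function.Injective φ := by
    rw [← LinearMap.ker_eq_bot, LinearMap.ker_eq_bot']
    intro p hp
    have h0 : g0 * (p : K[X]) = 0 := by
      ext t
      by_cases ht : t < n
      · exact congrFun hp ⟨t, ht⟩
      · rw [coeff_zero]
        exact coeff_eq_zero_of_degree_lt (lt_of_lt_of_le (hbound p) (by exact_mod_cast not_lt.1 ht))
    rcases mul_eq_zero.1 h0 with h1 | h1
    · exact absurd h1 hmon0.ne_zero
    · exact Subtype.ext h1
  have hrange : LinearMap.range φ = cyclicCodeOn K L n (Z : Set L) := by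
    ext c
    constructor
    · rintro ⟨p, rfl⟩ β hβ
      have h1 : aeval β (g0 * (p : K[X])) = 0 := by
        rw [map_mul, ← Polynomial.eval_map_algebraMap, hg0, hg, Polynomial.eval_prod,
          Finset.prod_eq_zero hβ (by simp), zero_mul]
      rw [aeval_eq_sum_range' (n := n)] at h1
      · rw [Finset.sum_range] at h1
        simpa [Algebra.smul_def, φ] using h1
      · by_cases h0 : g0 * (p : K[X]) = 0
        · have := hbound p
          rw [h0, natDegree_zero]
          rcases Nat.eq_zero_or_pos n with hn0 | hn0
          · subst hn0
            exfalso
            have := p.2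
            have : Z.card = 0 := by omega
            have hne := Finset.card_eq_zero.1 this
            rw [hne] at hβ; simp at hβ
          · exact hn0
        · exact (natDegree_lt_iff_degree_lt h0).2 (hbound p)
    · intro hc
      set f : K[X] := ∑ j : Fin n, C (c j) * X ^ (j : ℕ) with hf
      have hfdeg : f.degree < n := by
        rw [← mem_degreeLT]
        refine Submodule.sum_mem _ fun j _ => ?_
        rw [mem_degreeLT]
        exact lt_of_le_of_lt (degree_C_mul_X_pow_le _ _) (by exact_mod_cast j.2)
      have hcoeff : ∀ j : Fin n, f.coeff j = c j := by
        intro j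
        rw [hf, finsetSum_coeff, Finset.sum_eq_single j]
        · simp
        · intro b _ hb
          rw [coeff_C_mul_X_pow, if_neg]
          intro h; exact hb (Fin.ext h.symm)
        · simp
      have hdvd : g0 ∣ f := by
        rw [← Polynomial.map_dvd_map (algebraMap K L) (algebraMap K L).injective hmon0, hg0, hg]
        apply Finset.prod_dvd_of_coprime
        · intro a _ b _ hab
          exact Polynomial.pairwise_coprime_X_sub_C Function.injective_id hab
        · intro z hz
          rw [dvd_iff_isRoot, IsRoot.def, hf]
          have := hc z hz
          simpa [Polynomial.map_sum, eval_finsetSum] using this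
      obtain ⟨p, hp⟩ := hdvd
      refine ⟨⟨p, ?_⟩, ?_⟩
      · rw [mem_degreeLT]
        by_cases h0 : p = 0
        · rw [h0, degree_zero]; exact WithBot.bot_lt_coe _
        · rw [← natDegree_lt_iff_degree_lt h0]
          rw [hp, ← natDegree_lt_iff_degree_lt (mul_ne_zero hmon0.ne_zero h0),
            natDegree_mul hmon0.ne_zero h0, hdeg0] at hfdeg
          omega
      · ext j
        change (g0 * p).coeff j = c j
        rw [← hp, hcoeff]
  rw [← hrange, LinearMap.finrank_range_of_inj hφ, (degreeLTEquiv K _).finrank_eq]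
  simp


def inE (m i w ℓ ν : ℕ) (e : ℤ) : Prop :=
  (-((ℓ : ℤ) * m + i + w) ≤ e ∧ e ≤ (ℓ : ℤ) * m + i + w) ∨
  ∃ u : ℤ, (ℓ : ℤ) + 1 ≤ u ∧ u ≤ (ν : ℤ) - ℓ - 1 ∧ u * m - w ≤ e ∧ e ≤ u * m + w

lemma sym_mem {L : Type} [Field L] (α : L) (M : ℕ) (x : L) :
    (∃ e ≤ M, x = α ^ e ∨ x = (α ^ e)⁻¹) ↔ ∃ e : ℤ, -(M : ℤ) ≤ e ∧ e ≤ M ∧ x = α ^ e := by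
  constructor
  · rintro ⟨e, he, rfl | rfl⟩
    · exact ⟨e, by omega, by omega, by simp⟩
    · exact ⟨-e, by omega, by omega, by simp⟩
  · rintro ⟨e, h1, h2, rfl⟩
    rcases le_total 0 e with h | h
    · refine ⟨e.toNat, by omega, Or.inl ?_⟩
      rw [← zpow_natCast, Int.toNat_of_nonneg h]
    · refine ⟨(-e).toNat, by omega, Or.inr ?_⟩
      rw [← zpow_natCast, Int.toNat_of_nonneg (by omega), zpow_neg, inv_inv]

lemma mem_AB {L : Type} [Field L] (α : L) (h0 : α ≠ 0) (m i w ℓ ν : ℕ) (A B : Set L)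
    (hν : 2 * ℓ + 1 ≤ ν)
    (hAdef : A = {x : L | ∃ e ≤ ℓ * m + i, x = α ^ e ∨ x = (α ^ e)⁻¹} ∪
      {x : L | ∃ u, ℓ + 1 ≤ u ∧ u ≤ ν - ℓ - 1 ∧ x = α ^ (u * m)})
    (hBdef : B = {x : L | ∃ e ≤ w, x = α ^ e ∨ x = (α ^ e)⁻¹}) (z : L) :
    z ∈ A * B ↔ ∃ e : ℤ, inE m i w ℓ ν e ∧ z = α ^ e := by
  subst hAdef hBdef
  simp only [sym_mem]
  rw [Set.mem_mul]
  constructor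
  · rintro ⟨a, (⟨e, h1, h2, rfl⟩ | ⟨u, h1, h2, rfl⟩), b, ⟨f, h3, h4, rfl⟩, rfl⟩
    · refine ⟨e + f, Or.inl ?_, by rw [zpow_add₀ h0]⟩
      push_cast at h1 h2
      constructor <;> linarith
    · refine ⟨(u * m : ℕ) + f, Or.inr ⟨u, by omega, by omega, ?_⟩, by rw [zpow_add₀ h0, zpow_natCast]⟩
      push_cast
      constructor <;> linarith
  · rintro ⟨e, (⟨h1, h2⟩ | ⟨u, h1, h2, h3, h4⟩), rfl⟩
    · obtain ⟨a, ha1, ha2, hb1, hb2⟩ : ∃ a : ℤ, -((ℓ * m + i : ℕ) : ℤ) ≤ a ∧ a ≤ (ℓ * m + i : ℕ) ∧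
          -(w : ℤ) ≤ e - a ∧ e - a ≤ w := by
        push_cast
        have ht : (0 : ℤ) ≤ ℓ * m := by positivity
        generalize (ℓ : ℤ) * m = t at *
        by_cases hw : e ≤ -(w : ℤ)
        · exact ⟨e + w, by omega, by omega, by omega, by omega⟩
        · by_cases hw2 : e ≤ w
          · exact ⟨0, by omega, by omega, by omega, by omega⟩
          · exact ⟨e - w, by omega, by omega, by omega, by omega⟩
      refine ⟨α ^ a, Or.inl ⟨a, ha1, ha2, rfl⟩, α ^ (e - a), ⟨e - a, hb1, hb2, rfl⟩, ?_⟩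
      rw [← zpow_add₀ h0]; congr 1; ring
    · refine ⟨α ^ (u.toNat * m), Or.inr ⟨u.toNat, by omega, by omega, rfl⟩, α ^ (e - u * m),
        ⟨e - u * m, by linarith, by linarith, rfl⟩, ?_⟩
      rw [← zpow_natCast, ← zpow_add₀ h0]; congr 1
      push_cast
      rw [Int.toNat_of_nonneg (by omega)]; ring

/-- all `um+b` are in the defining set -/
lemma grid_mem {L : Type} [Field L] (α : L) (h0 : α ≠ 0) (m i w ℓ ν : ℕ)
    (hα : α ^ (ν * m) = 1)
    (u : ℕ) (hu : u < ν) (b : ℤ) (hb1 : -(w : ℤ) ≤ b) (hb2 : b ≤ w) :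
    ∃ e : ℤ, inE m i w ℓ ν e ∧ α ^ ((u : ℤ) * m + b) = α ^ e := by
  have hm : (0 : ℤ) ≤ m := by positivity
  by_cases h1 : u ≤ ℓ
  · refine ⟨_, Or.inl ⟨?_, ?_⟩, rfl⟩
    · have : (0 : ℤ) ≤ u * m := by positivity
      have : (0 : ℤ) ≤ ℓ * m := by positivity
      omega
    · have : (u : ℤ) * m ≤ ℓ * m := by gcongr
      omega
  · by_cases h2 : u + ℓ + 1 ≤ ν
    · exact ⟨_, Or.inr ⟨u, by omega, by omega, by linarith, by linarith⟩, rfl⟩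
    · refine ⟨((u : ℤ) - ν) * m + b, Or.inl ⟨?_, ?_⟩, ?_⟩
      · have : (-ℓ : ℤ) * m ≤ ((u : ℤ) - ν) * m := mul_le_mul_of_nonneg_right (by omega) hm
        linarith
      · have : ((u : ℤ) - ν) * m ≤ 0 * m := mul_le_mul_of_nonneg_right (by omega) hm
        have : (0 : ℤ) ≤ ℓ * m := by positivity
        linarith
      · have : (u : ℤ) * m + b = (((u : ℤ) - ν) * m + b) + ((ν * m : ℕ) : ℤ) := by push_cast; ring
        rw [this, zpow_add₀ h0, zpow_natCast, hα, mul_one]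

lemma inE_neg {L : Type} [Field L] (α : L) (h0 : α ≠ 0) (m i w ℓ ν : ℕ)
    (hα : α ^ (ν * m) = 1) (e : ℤ) (he : inE m i w ℓ ν e) :
    ∃ e' : ℤ, inE m i w ℓ ν e' ∧ (α ^ e)⁻¹ = α ^ e' := by
  rcases he with ⟨h1, h2⟩ | ⟨u, h1, h2, h3, h4⟩
  · exact ⟨-e, Or.inl ⟨by linarith, by linarith⟩, by rw [zpow_neg]⟩
  · refine ⟨-e + ((ν * m : ℕ) : ℤ), Or.inr ⟨ν - u, by omega, by omega, ?_, ?_⟩, ?_⟩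
    · push_cast; linarith
    · push_cast; linarith
    · rw [zpow_add₀ h0, zpow_natCast, hα, mul_one, zpow_neg]

/-- The finset of exponents. -/
def finE (m i w ℓ ν : ℕ) : Finset ℤ :=
  Finset.Icc (-((ℓ : ℤ) * m + i + w)) ((ℓ : ℤ) * m + i + w) ∪
  (Finset.Icc ((ℓ : ℤ) + 1) ((ν : ℤ) - ℓ - 1)).biUnion
    fun u => Finset.Icc (u * m - w) (u * m + w)

lemma mem_finE (m i w ℓ ν : ℕ) (e : ℤ) : e ∈ finE m i w ℓ ν ↔ inE m i w ℓ ν e := by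
  simp only [finE, inE, Finset.mem_union, Finset.mem_Icc, Finset.mem_biUnion, and_assoc]

lemma card_finE (r m i w ℓ ν : ℕ) (hm : m = r + 2 * w + 1) (hi : 2 * i + 1 ≤ r)
    (hν : 2 * ℓ + 1 ≤ ν) :
    (finE m i w ℓ ν).card = 2 * (ℓ * m + i + w) + 1 + (ν - 2 * ℓ - 1) * (2 * w + 1) := by
  rw [finE, Finset.card_union_of_disjoint, Finset.card_biUnion]
  · have h1 : ∀ u : ℤ, (Finset.Icc (u * m - w) (u * m + w)).card = 2 * w + 1 := by
      intro u; rw [Int.card_Icc]; omega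
    simp only [h1, Finset.sum_const, smul_eq_mul, Int.card_Icc]
    congr 1
    · have : (ℓ : ℤ) * m = ((ℓ * m : ℕ) : ℤ) := by push_cast; ring
      rw [this]; omega
    · congr 1; omega
  · intro u _ v _ huv
    rw [Function.onFun]
    rw [Finset.disjoint_left]
    intro e he he'
    rw [Finset.mem_Icc] at he he'
    apply huv
    have hm' : (m : ℤ) = r + 2 * w + 1 := by exact_mod_cast hm
    have hm0 : (0 : ℤ) < m := by omega
    by_contra hne
    rcases lt_or_gt_of_ne hne with h | h
    · have : (u + 1) * (m : ℤ) ≤ v * m := mul_le_mul_of_nonneg_right (by omega) hm0.le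
      linarith
    · have : (v + 1) * (m : ℤ) ≤ u * m := mul_le_mul_of_nonneg_right (by omega) hm0.le
      linarith
  · rw [Finset.disjoint_left]
    intro e he he'
    rw [Finset.mem_Icc] at he
    obtain ⟨u, hu, hu2⟩ := Finset.mem_biUnion.1 he'
    rw [Finset.mem_Icc] at hu hu2
    have hm' : (m : ℤ) = r + 2 * w + 1 := by exact_mod_cast hm
    have : ((ℓ : ℤ) + 1) * (m : ℤ) ≤ u * m := mul_le_mul_of_nonneg_right (by omega) (by positivity)
    have : (2 * i + 1 : ℤ) ≤ r := by exact_mod_cast hi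
    linarith

lemma inj_finE {L : Type} [Field L] (α : L) (r m i w ℓ ν : ℕ) (hm : m = r + 2 * w + 1)
    (hi : 2 * i + 1 ≤ r) (hν : 2 * ℓ + 1 ≤ ν) (hα : IsPrimitiveRoot α (ν * m)) (h0 : α ≠ 0) :
    Set.InjOn (fun e : ℤ => α ^ e) (finE m i w ℓ ν) := by
  have hm' : (m : ℤ) = r + 2 * w + 1 := by exact_mod_cast hm
  have hi' : (2 * i + 1 : ℤ) ≤ r := by exact_mod_cast hi
  have hν' : (2 * ℓ + 1 : ℤ) ≤ ν := by exact_mod_cast hν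
  have hm0 : (0 : ℤ) ≤ m := by positivity
  have hbd : ∀ e, inE m i w ℓ ν e → -((ℓ : ℤ) * m + i + w) ≤ e ∧ e < -((ℓ : ℤ) * m + i + w) + ν * m := by
    rintro e (⟨h1, h2⟩ | ⟨u, h1, h2, h3, h4⟩)
    · refine ⟨h1, ?_⟩
      have : (2 * ℓ + 1 : ℤ) * m ≤ ν * m := mul_le_mul_of_nonneg_right hν' hm0
      linarith
    · have h5 : ((ℓ : ℤ) + 1) * (m : ℤ) ≤ u * m := mul_le_mul_of_nonneg_right h1 hm0
      have h6 : u * (m : ℤ) ≤ ((ν : ℤ) - ℓ - 1) * m := mul_le_mul_of_nonneg_right h2 hm0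
      have h7 : (0 : ℤ) ≤ ℓ * m := by positivity
      constructor <;> linarith
  intro a ha b hb hab
  obtain ⟨ha1, ha2⟩ := hbd a ((mem_finE ..).1 ha)
  obtain ⟨hb1, hb2⟩ := hbd b ((mem_finE ..).1 hb)
  have h1 : α ^ (a - b) = 1 := by
    rw [zpow_sub₀ h0]; exact (div_eq_one_iff_eq (zpow_ne_zero _ h0)).2 hab
  rw [hα.zpow_eq_one_iff_dvd] at h1
  have := Int.eq_zero_of_abs_lt_dvd h1 (by push_cast; rw [abs_lt]; constructor <;> linarith)
  omega


lemma code_zero {K L : Type} [Field K] [Field L] [Algebra K L] (α : L) (n m i w ℓ ν : ℕ)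
    (Z : Set L) (hZ : ∀ z, z ∈ Z ↔ ∃ e : ℤ, inE m i w ℓ ν e ∧ z = α ^ e)
    (c : Fin n → K) (hc : c ∈ cyclicCodeOn K L n Z) (e : ℤ) (z : L) (hz : z = α ^ e)
    (he : inE m i w ℓ ν e) :
    ∑ j : Fin n, algebraMap K L (c j) * z ^ (j : ℕ) = 0 :=
  hc z ((hZ z).2 ⟨e, he, hz⟩)

lemma pow_inj_fin {L : Type} [Field L] (α : L) (n : ℕ) (hα : IsPrimitiveRoot α n)
    (S : Set (Fin n)) : Set.InjOn (fun j : Fin n => α ^ (j : ℕ)) S := by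
  intro a _ b _ hab
  exact Fin.ext (hα.pow_inj a.2 b.2 hab)

/-- shifted Vandermonde -/
lemma vand_shift {K L : Type} [Field K] [Field L] [Algebra K L] (α : L) (h0 : α ≠ 0) (n : ℕ)
    (hα : IsPrimitiveRoot α n) (c : Fin n → K) (S : Finset (Fin n)) (D : ℕ)
    (hS : S.card ≤ 2 * D + 1)
    (h : ∀ e : ℤ, -(D : ℤ) ≤ e → e ≤ D → ∑ j ∈ S, algebraMap K L (c j) * (α ^ e) ^ (j : ℕ) = 0) :
    ∀ j ∈ S, c j = 0 := by
  intro j hj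
  have := vand_zero S (fun j : Fin n => α ^ (j : ℕ))
    (fun j => algebraMap K L (c j) * (α ^ (-(D : ℤ))) ^ (j : ℕ)) (pow_inj_fin α n hα _)
    (2 * D + 1) hS (by
      intro t ht
      rw [← h (t - D) (by omega) (by omega)]
      apply Finset.sum_congr rfl
      intro k _
      rw [mul_assoc]
      congr 1
      simp only [← zpow_natCast, ← zpow_mul]
      rw [← zpow_add₀ h0]
      congr 1
      ring) j hj
  rcases mul_eq_zero.1 this with h1 | h1
  · exact (map_eq_zero _).1 h1
  · exact absurd h1 (pow_ne_zero _ (zpow_ne_zero _ h0))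

lemma min_wt {K L : Type} [Field K] [Field L] [Algebra K L] (α : L) (h0 : α ≠ 0)
    (n m i w ℓ ν : ℕ) (hα : IsPrimitiveRoot α n)
    (Z : Set L) (hZ : ∀ z, z ∈ Z ↔ ∃ e : ℤ, inE m i w ℓ ν e ∧ z = α ^ e)
    (c : Fin n → K) (hc : c ∈ cyclicCodeOn K L n Z) (hc0 : c ≠ 0) :
    2 * (ℓ * m + i + w) + 2 ≤ wt c := by
  classical
  by_contra hlt
  apply hc0
  ext j
  by_contra hj
  refine hj (vand_shift (K := K) α h0 n hα c (Finset.univ.filter fun j => c j ≠ 0)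
    (ℓ * m + i + w) ?_ ?_ j (by simpa using hj))
  · unfold wt at hlt
    convert Nat.lt_succ_iff.1 (not_le.1 hlt)
  · intro e h1 h2
    push_cast at h1 h2
    rw [← code_zero α n m i w ℓ ν Z hZ c hc e _ rfl (Or.inl ⟨h1, h2⟩)]
    apply Finset.sum_subset (Finset.subset_univ _)
    intro k _ hk
    have : c k = 0 := by simpa using hk
    simp [this]

lemma coset_sum {K L : Type} [Field K] [Field L] [Algebra K L] (α : L) (h0 : α ≠ 0)
    (n m i w ℓ ν : ℕ) (hα : IsPrimitiveRoot α n) (hn : n = ν * m) (hn0 : 0 < n) (hνL : (ν : L) ≠ 0)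
    (Z : Set L) (hZ : ∀ z, z ∈ Z ↔ ∃ e : ℤ, inE m i w ℓ ν e ∧ z = α ^ e)
    (c : Fin n → K) (hc : c ∈ cyclicCodeOn K L n Z) (a : ℕ) (ha : a < ν)
    (b : ℤ) (hb1 : -(w : ℤ) ≤ b) (hb2 : b ≤ w) :
    ∑ j ∈ Finset.univ.filter (fun j : Fin n => (j : ℕ) % ν = a), algebraMap K L (c j) * (α ^ b) ^ (j : ℕ) = 0 := by
  have hζ : IsPrimitiveRoot (α ^ m) ν := hα.pow hn0 (by rw [hn, mul_comm])
  have h1 : ∀ u ∈ Finset.range ν,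
      (α ^ (-((m : ℤ) * a))) ^ u * ∑ j : Fin n, algebraMap K L (c j) * (α ^ ((u : ℤ) * m + b)) ^ (j : ℕ) = 0 := by
    intro u hu
    obtain ⟨e, he, he2⟩ := grid_mem α h0 m i w ℓ ν (by rw [← hn]; exact hα.pow_eq_one) u
      (Finset.mem_range.1 hu) b hb1 hb2
    rw [code_zero α n m i w ℓ ν Z hZ c hc e _ he2 he, mul_zero]
  have h2 := Finset.sum_eq_zero h1
  simp only [Finset.mul_sum] at h2
  rw [Finset.sum_comm] at h2
  have h3 : ∀ j : Fin n, ∑ u ∈ Finset.range ν, (α ^ (-((m : ℤ) * a))) ^ u *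
      (algebraMap K L (c j) * (α ^ ((u : ℤ) * m + b)) ^ (j : ℕ)) =
      if (j : ℕ) % ν = a then (ν : L) * (algebraMap K L (c j) * (α ^ b) ^ (j : ℕ)) else 0 := by
    intro j
    have h4 : ∀ u : ℕ, (α ^ (-((m : ℤ) * a))) ^ u *
      (algebraMap K L (c j) * (α ^ ((u : ℤ) * m + b)) ^ (j : ℕ)) =
      (algebraMap K L (c j) * (α ^ b) ^ (j : ℕ)) * ((α ^ m) ^ ((j : ℤ) - a)) ^ u := by
      intro u
      rw [mul_left_comm, mul_assoc]
      congr 1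
      simp only [← zpow_natCast, ← zpow_mul]
      rw [← zpow_add₀ h0, ← zpow_add₀ h0]
      congr 1
      ring
    simp only [h4]
    rw [← Finset.mul_sum]
    have hiff : (α ^ m) ^ ((j : ℤ) - a) = 1 ↔ (j : ℕ) % ν = a := by
      rw [hζ.zpow_eq_one_iff_dvd]
      rw [← Nat.modEq_iff_dvd]
      unfold Nat.ModEq
      rw [Nat.mod_eq_of_lt ha, eq_comm]
    split_ifs with hja
    · rw [hiff.2 hja]; simp [mul_comm]
    · have hne : (α ^ m) ^ ((j : ℤ) - a) ≠ 1 := fun h => hja (hiff.1 h)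
      have : ((α ^ m) ^ ((j : ℤ) - a)) ^ ν = 1 := by
        rw [← zpow_natCast, ← zpow_mul, mul_comm, zpow_mul, zpow_natCast, hζ.pow_eq_one, one_zpow]
      rw [geom_sum_eq hne, this, sub_self, zero_div, mul_zero]
  rw [Finset.sum_congr rfl (fun j _ => h3 j), ← Finset.sum_filter, ← Finset.mul_sum] at h2
  exact (mul_eq_zero.1 h2).resolve_left hνL

lemma local_zero {K L : Type} [Field K] [Field L] [Algebra K L] (α : L) (h0 : α ≠ 0)
    (n m i w ℓ ν : ℕ) (hα : IsPrimitiveRoot α n) (hn : n = ν * m) (hn0 : 0 < n) (hνL : (ν : L) ≠ 0)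
    (Z : Set L) (hZ : ∀ z, z ∈ Z ↔ ∃ e : ℤ, inE m i w ℓ ν e ∧ z = α ^ e)
    (c : Fin n → K) (hc : c ∈ cyclicCodeOn K L n Z) (a : ℕ) (ha : a < ν)
    (S : Finset (Fin n)) (hS : ∀ j : Fin n, (j : ℕ) % ν = a → c j ≠ 0 → j ∈ S) (hcard : S.card ≤ 2 * w + 1) :
    ∀ j : Fin n, (j : ℕ) % ν = a → c j = 0 := by
  classical
  intro j hj
  by_contra hj0
  refine hj0 (vand_shift (K := K) α h0 n hα c
    (Finset.univ.filter fun j : Fin n => (j : ℕ) % ν = a ∧ c j ≠ 0) w ?_ ?_ j (by simp [hj, hj0]))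
  · refine le_trans (Finset.card_le_card ?_) hcard
    intro k hk
    simp only [Finset.mem_filter, Finset.mem_univ, true_and] at hk
    exact hS k hk.1 hk.2
  · intro e h1 h2
    rw [← coset_sum α h0 n m i w ℓ ν hα hn hn0 hνL Z hZ c hc a ha e h1 h2]
    apply Finset.sum_subset
    · intro k hk
      simp only [Finset.mem_filter, Finset.mem_univ, true_and] at hk ⊢
      exact hk.1
    · intro k hk hk2
      simp only [Finset.mem_filter, Finset.mem_univ, true_and] at hk hk2
      have : c k = 0 := by
        by_contra h; exact hk2 ⟨hk, h⟩
      simp [this]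

/-- counting via `(j % ν, j / ν)` -/
lemma card_le_grid (n ν : ℕ) (S : Finset (Fin n)) (T : Finset (ℕ × ℕ))
    (h : ∀ j ∈ S, ((j : ℕ) % ν, (j : ℕ) / ν) ∈ T) : S.card ≤ T.card := by
  apply Finset.card_le_card_of_injOn (fun j : Fin n => ((j : ℕ) % ν, (j : ℕ) / ν)) h
  intro a _ b _ hab
  simp only [Prod.mk.injEq] at hab
  apply Fin.ext
  rw [← Nat.mod_add_div a ν, ← Nat.mod_add_div b ν, hab.1, hab.2]

lemma exists_light {K L : Type} [Field K] [Field L] [Algebra K L] (α : L) (h0 : α ≠ 0)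
    (n r m i w ℓ ν : ℕ) (hα : IsPrimitiveRoot α n) (hn : n = ν * m) (hn0 : 0 < n)
    (hνL : (ν : L) ≠ 0) (hm : m = r + 2 * w + 1) (hi : 2 * i + 1 ≤ r) (hν : 2 * ℓ + 1 ≤ ν)
    (Z : Set L) (hZ : ∀ z, z ∈ Z ↔ ∃ e : ℤ, inE m i w ℓ ν e ∧ z = α ^ e)
    (hdim : Module.finrank K (cyclicCodeOn K L n Z) = (ν - 2 * ℓ) * r - 2 * i) :
    ∃ c ∈ cyclicCodeOn K L n Z, c ≠ 0 ∧ wt c ≤ 2 * (ℓ * m + i + w) + 2 := by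
  classical
  obtain ⟨t, ht⟩ : ∃ t, ν = 2 * ℓ + 1 + t := ⟨ν - (2 * ℓ + 1), by omega⟩
  obtain ⟨s, hs⟩ : ∃ s, r = 2 * i + 1 + s := ⟨r - (2 * i + 1), by omega⟩
  have hdim' : Module.finrank K (cyclicCodeOn K L n Z) = t * r + s + 1 := by
    rw [hdim, ht, show 2 * ℓ + 1 + t - 2 * ℓ = t + 1 by omega, add_mul, one_mul]
    omega
  have hν0 : 0 < ν := by omega
  have hdiv : ∀ j : Fin n, (j : ℕ) / ν < m := fun j => by
    rw [Nat.div_lt_iff_lt_mul hν0, mul_comm, ← hn]; exact j.2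
  set T : Finset (Fin n) := Finset.univ.filter fun j : Fin n =>
    ((j : ℕ) % ν < t ∧ (j : ℕ) / ν < r) ∨ ((j : ℕ) % ν = t ∧ (j : ℕ) / ν < s) with hT
  have hTc : T.card ≤ t * r + s := by
    refine le_trans (card_le_grid n ν T ((Finset.range t ×ˢ Finset.range r) ∪ ({t} ×ˢ Finset.range s)) ?_) ?_
    · intro j hj
      simp only [hT, Finset.mem_filter, Finset.mem_univ, true_and] at hj
      simp only [Finset.mem_union, Finset.mem_product, Finset.mem_singleton, Finset.mem_range]
      exact hj
    · refine le_trans (Finset.card_union_le _ _) ?_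
      simp
  let ψ : cyclicCodeOn K L n Z →ₗ[K] (T → K) :=
    (LinearMap.funLeft K K (fun j : T => (j : Fin n))).comp (cyclicCodeOn K L n Z).subtype
  have hker : LinearMap.ker ψ ≠ ⊥ := by
    apply LinearMap.ker_ne_bot_of_finrank_lt
    rw [hdim', Module.finrank_fintype_fun_eq_card, Fintype.card_coe]
    omega
  obtain ⟨c, hcker, hc0⟩ := Submodule.exists_mem_ne_zero_of_ne_bot hker
  have hcT : ∀ j ∈ T, (c : Fin n → K) j = 0 := by
    intro j hj
    exact congrFun (LinearMap.mem_ker.1 hcker) ⟨j, hj⟩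
  refine ⟨c, c.2, fun h => hc0 (Subtype.ext h), ?_⟩
  have hgroup : ∀ j : Fin n, (j : ℕ) % ν < t → (c : Fin n → K) j = 0 := by
    intro j hj
    refine local_zero (K := K) α h0 n m i w ℓ ν hα hn hn0 hνL Z hZ (c : Fin n → K) c.2 ((j : ℕ) % ν) (by omega)
      (Finset.univ.filter fun k : Fin n => (k : ℕ) % ν = (j : ℕ) % ν ∧ (c : Fin n → K) k ≠ 0)
      (by intro k h1 h2; simp [h1, h2]) ?_ j rfl
    refine le_trans (card_le_grid n ν _ ({(j : ℕ) % ν} ×ˢ Finset.Ico r m) ?_) ?_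
    · intro k hk
      simp only [Finset.mem_filter, Finset.mem_univ, true_and] at hk
      simp only [Finset.mem_product, Finset.mem_singleton, Finset.mem_Ico]
      refine ⟨hk.1, ?_, hdiv k⟩
      by_contra hlt
      exact hk.2 (hcT k (by simp only [hT, Finset.mem_filter, Finset.mem_univ, true_and]; left; omega))
    · simp; omega
  unfold wt
  refine le_trans (card_le_grid n ν _ (({t} ×ˢ Finset.Ico s m) ∪ (Finset.Ioo t ν ×ˢ Finset.range m)) ?_) ?_
  · intro j hj
    have hj : (c : Fin n → K) j ≠ 0 := by simpa using hj
    have h1 : ¬ (j : ℕ) % ν < t := fun h => hj (hgroup j h)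
    have h2 : ¬ ((j : ℕ) % ν = t ∧ (j : ℕ) / ν < s) := fun h => hj (hcT j (by
      simp only [hT, Finset.mem_filter, Finset.mem_univ, true_and]; right; exact h))
    have h3 := hdiv j
    have h4 := Nat.mod_lt (j : ℕ) hν0
    simp only [Finset.mem_union, Finset.mem_product, Finset.mem_singleton, Finset.mem_Ico,
      Finset.mem_Ioo, Finset.mem_range]
    omega
  · refine le_trans (Finset.card_union_le _ _) ?_
    simp only [Finset.card_product, Finset.card_singleton, Nat.card_Ico, Nat.card_Ioo, Finset.card_range]
    rw [ht, show 2 * ℓ + 1 + t - t - 1 = 2 * ℓ by omega, mul_assoc]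
    omega

lemma locality {K L : Type} [Field K] [Field L] [Algebra K L] (α : L) (h0 : α ≠ 0)
    (n r m i w ℓ ν : ℕ) (hα : IsPrimitiveRoot α n) (hn : n = ν * m) (hn0 : 0 < n)
    (hνL : (ν : L) ≠ 0) (hm : m = r + 2 * w + 1)
    (Z : Set L) (hZ : ∀ z, z ∈ Z ↔ ∃ e : ℤ, inE m i w ℓ ν e ∧ z = α ^ e) :
    HasLocality (cyclicCodeOn K L n Z : Set (Fin n → K)) r (2 * w + 2) := by
  classical
  have hν0 : 0 < ν := Nat.pos_of_ne_zero (by rintro rfl; simp at hn; omega)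
  intro p
  refine ⟨Finset.univ.filter fun j : Fin n => (j : ℕ) % ν = (p : ℕ) % ν, by simp, ?_, ?_⟩
  · refine le_trans (card_le_grid n ν _ ({(p : ℕ) % ν} ×ˢ Finset.range m) ?_) ?_
    · intro k hk
      simp only [Finset.mem_filter, Finset.mem_univ, true_and] at hk
      simp only [Finset.mem_product, Finset.mem_singleton, Finset.mem_range]
      refine ⟨hk, ?_⟩
      rw [Nat.div_lt_iff_lt_mul hν0, mul_comm, ← hn]; exact k.2
    · simp; omega
  · rintro c hc c' hc' ⟨j, hj, hne⟩
    by_contra hlt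
    have hj : (j : ℕ) % ν = (p : ℕ) % ν := by simpa using hj
    have := local_zero α h0 n m i w ℓ ν hα hn hn0 hνL Z hZ (c - c')
      (Submodule.sub_mem _ hc hc') ((p : ℕ) % ν) (Nat.mod_lt _ hν0)
      ((Finset.univ.filter fun j : Fin n => (j : ℕ) % ν = (p : ℕ) % ν).filter fun j => c j ≠ c' j)
      (by
        intro k h1 h2
        simp only [Finset.mem_filter, Finset.mem_univ, true_and]
        exact ⟨h1, fun h => h2 (by simp [h])⟩)
      (by convert Nat.lt_succ_iff.1 (not_le.1 hlt)) j hj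
    exact hne (sub_eq_zero.1 this)

lemma dim_eq {K L : Type} [Field K] [Fintype K] [Field L] [Algebra K L] (α : L) (h0 : α ≠ 0)
    (n r m i w ℓ ν : ℕ) (hα : IsPrimitiveRoot α n) (hn : n = ν * m)
    (hdvd : n ∣ Fintype.card K + 1)
    (hm : m = r + 2 * w + 1) (hi : 2 * i + 1 ≤ r) (hν : 2 * ℓ + 1 ≤ ν)
    (Z : Set L) (hZ : ∀ z, z ∈ Z ↔ ∃ e : ℤ, inE m i w ℓ ν e ∧ z = α ^ e) :
    Module.finrank K (cyclicCodeOn K L n Z) = (ν - 2 * ℓ) * r - 2 * i := by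
  classical
  have hZf : Z = (((finE m i w ℓ ν).image fun e : ℤ => α ^ e : Finset L) : Set L) := by
    ext z
    rw [hZ]
    simp only [Finset.coe_image, Set.mem_image, Finset.mem_coe, mem_finE]
    exact ⟨fun ⟨e, h1, h2⟩ => ⟨e, h1, h2.symm⟩, fun ⟨e, h1, h2⟩ => ⟨e, h1, h2.symm⟩⟩
  have hcard : ((finE m i w ℓ ν).image fun e : ℤ => α ^ e).card =
      2 * (ℓ * m + i + w) + 1 + (ν - 2 * ℓ - 1) * (2 * w + 1) := by
    rw [Finset.card_image_of_injOn (inj_finE α r m i w ℓ ν hm hi hν (hn ▸ hα) h0),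
      card_finE r m i w ℓ ν hm hi hν]
  obtain ⟨t, ht⟩ : ∃ t, ν = 2 * ℓ + 1 + t := ⟨ν - (2 * ℓ + 1), by omega⟩
  obtain ⟨s, hs⟩ : ∃ s, r = 2 * i + 1 + s := ⟨r - (2 * i + 1), by omega⟩
  have hsum : n = (2 * (ℓ * m + i + w) + 1 + (ν - 2 * ℓ - 1) * (2 * w + 1)) + (t * r + s + 1) := by
    rw [hn, ht, show 2 * ℓ + 1 + t - 2 * ℓ - 1 = t by omega, hm, hs]
    ring
  have hk : (ν - 2 * ℓ) * r - 2 * i = t * r + s + 1 := by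
    rw [ht, show 2 * ℓ + 1 + t - 2 * ℓ = t + 1 by omega, add_mul, one_mul]
    omega
  rw [hZf, finrank_code, hcard, hk]
  · omega
  · intro z hz
    rw [← Finset.mem_coe, ← hZf, hZ] at hz ⊢
    obtain ⟨e, he, rfl⟩ := hz
    obtain ⟨e', he', h2⟩ := inE_neg α h0 m i w ℓ ν (by rw [← hn]; exact hα.pow_eq_one) e he
    refine ⟨e', he', ?_⟩
    rw [← h2]
    apply eq_inv_of_mul_eq_one_left
    rw [← pow_succ]
    obtain ⟨k, hk⟩ := hdvd
    rw [hk, ← zpow_natCast, ← zpow_mul, mul_comm, zpow_mul, zpow_natCast, pow_mul, hα.pow_eq_one,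
      one_pow, one_zpow]
  · rw [hcard]; omega

lemma opt_eq (n r m i w ℓ ν : ℕ) (hn : n = ν * m)
    (hm : m = r + 2 * w + 1) (hi : 2 * i + 1 ≤ r) (hν : 2 * ℓ + 1 ≤ ν) :
    SingletonOpt n ((ν - 2 * ℓ) * r - 2 * i) r (2 * w + 2) (2 * (ℓ * m + i + w) + 2) := by
  obtain ⟨t, ht⟩ : ∃ t, ν = 2 * ℓ + 1 + t := ⟨ν - (2 * ℓ + 1), by omega⟩
  obtain ⟨s, hs⟩ : ∃ s, r = 2 * i + 1 + s := ⟨r - (2 * i + 1), by omega⟩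
  have hk : (ν - 2 * ℓ) * r - 2 * i = t * r + s + 1 := by
    rw [ht, show 2 * ℓ + 1 + t - 2 * ℓ = t + 1 by omega, add_mul, one_mul]
    omega
  have hsum : n = (2 * (ℓ * m + i + w) + 1 + t * (2 * w + 1)) + (t * r + s + 1) + 2 * w + 1 - (2 * w + 1) := by
    rw [hn, ht, hm, hs]
    have : (2 * ℓ + 1 + t) * (2 * i + 1 + s + 2 * w + 1) = (2 * (ℓ * (2 * i + 1 + s + 2 * w + 1) + i + w) + 1 + t * (2 * w + 1)) + (t * (2 * i + 1 + s) + s + 1) := by ring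
    omega
  have hc : ceilDiv' (t * r + s + 1) r = t + 1 := by
    unfold ceilDiv'
    rw [show t * r + s + 1 + r - 1 = s + r * (t + 1) by rw [mul_add, mul_comm t r]; omega,
      Nat.add_mul_div_left _ _ (by omega), Nat.div_eq_of_lt (by omega), zero_add]
  unfold SingletonOpt
  rw [hk, hc, show t + 1 - 1 = t by omega, show 2 * w + 2 - 1 = 2 * w + 1 by omega]
  omega


/-- Corollary 5.2(1) of the paper: explicit optimal cyclic `(r,δ)`-LRCs
of length `n ∣ q + 1` with `δ` even and `(r + δ - 1) ∣ n`. -/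
theorem stmt17 (K L : Type) [Field K] [Fintype K] [Field L] [Fintype L] [Algebra K L]
    (n r δ i ℓ : ℕ)
    (hn : 0 < n) (hr : 0 < r) (hδ : 2 ≤ δ) (hδeven : Even δ)
    (hdvd : n ∣ Fintype.card K + 1) (hcop : Nat.Coprime n (Fintype.card K))
    (hcard : Fintype.card L = Fintype.card K ^ 2)
    (hrdn : (r + δ - 1) ∣ n)
    (α : L) (hα : IsPrimitiveRoot α n)
    (hi : i ≤ (r - 1) / 2) (hℓ : ℓ ≤ (n / (r + δ - 1) - 2) / 2)
    (A B : Set L)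
    (hAdef : A = {x : L | ∃ e ≤ ℓ * (r + δ - 1) + i, x = α ^ e ∨ x = (α ^ e)⁻¹} ∪
      {x : L | ∃ u, ℓ + 1 ≤ u ∧ u ≤ n / (r + δ - 1) - ℓ - 1 ∧ x = α ^ (u * (r + δ - 1))})
    (hBdef : B = {x : L | ∃ e ≤ (δ - 2) / 2, x = α ^ e ∨ x = (α ^ e)⁻¹}) :
    HasLocality (cyclicCodeOn K L n (A * B) : Set (Fin n → K)) r δ ∧
    Module.finrank K (cyclicCodeOn K L n (A * B))
      = (n / (r + δ - 1) - 2 * ℓ) * r - 2 * i ∧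
    IsMinDist (cyclicCodeOn K L n (A * B) : Set (Fin n → K))
      (δ + 2 * i + 2 * ℓ * (r + δ - 1)) ∧
    SingletonOpt n ((n / (r + δ - 1) - 2 * ℓ) * r - 2 * i) r δ
      (δ + 2 * i + 2 * ℓ * (r + δ - 1)) := by
  obtain ⟨w, hw⟩ : ∃ w, δ = 2 * w + 2 := by
    obtain ⟨v, hv⟩ := hδeven
    exact ⟨v - 1, by omega⟩
  subst hw
  have e2 : (2 * w + 2 - 2) / 2 = w := by omega
  rw [e2] at hBdef
  obtain ⟨m, hm'⟩ : ∃ m, r + (2 * w + 2) - 1 = m := ⟨_, rfl⟩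
  rw [hm'] at hrdn hℓ hAdef ⊢
  have hm : m = r + 2 * w + 1 := by omega
  have hm0 : 0 < m := by omega
  obtain ⟨ν, hν⟩ := hrdn
  have e3 : n / m = ν := by rw [hν, Nat.mul_div_cancel_left _ hm0]
  rw [e3] at hℓ hAdef ⊢
  have hn' : n = ν * m := by rw [hν, mul_comm]
  have hν0 : 0 < ν := Nat.pos_of_ne_zero (by rintro rfl; simp at hn'; omega)
  have hνℓ : 2 * ℓ + 1 ≤ ν := by omega
  have hi' : 2 * i + 1 ≤ r := by omega
  have h0 : α ≠ 0 := hα.ne_zero (by omega)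
  have hνL : (ν : L) ≠ 0 := by
    intro h
    obtain ⟨k, hk⟩ := hdvd
    have hq : ((Fintype.card K : ℕ) : L) = 0 := by
      rw [← map_natCast (algebraMap K L), FiniteField.cast_card_eq_zero K, map_zero]
    have := congrArg (fun x : ℕ => (x : L)) hk
    simp [hq, hn', h] at this
  have hZ := mem_AB α h0 m i w ℓ ν A B hνℓ hAdef hBdef
  have hdim := dim_eq (K := K) α h0 n r m i w ℓ ν hα hn' hdvd hm hi' hνℓ (A * B) hZ
  have hd : 2 * w + 2 + 2 * i + 2 * ℓ * m = 2 * (ℓ * m + i + w) + 2 := by ring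
  rw [hd]
  refine ⟨locality α h0 n r m i w ℓ ν hα hn' hn hνL hm (A * B) hZ, hdim, ⟨?_, ?_⟩,
    opt_eq n r m i w ℓ ν hn' hm hi' hνℓ⟩
  · obtain ⟨c, hc, hc0, hle⟩ := exists_light (K := K) α h0 n r m i w ℓ ν hα hn' hn hνL hm hi' hνℓ
      (A * B) hZ hdim
    exact ⟨c, hc, hc0, le_antisymm hle (min_wt α h0 n m i w ℓ ν hα (A * B) hZ c hc hc0)⟩
  · intro c hc hc0
    exact min_wt α h0 n m i w ℓ ν hα (A * B) hZ c hc hc0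
end
end
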